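/- Let (X,μ) be a probability space, T an ergodic invertible measure-preserving transformation, and D(j) ⊆ X measurable sets with μ(D(j)) → a > 0 and μ(D(j) Δ T D(j)) → 0. Then for all measurable sets A, B: μ(D(j) ∩ A ∩ B) − a·μ(A ∩ B) → 0; equivalently, the multiplication operators by the indicator of D(j) converge weakly to a·I on L²(X,μ). -/

import Mathlib

open MeasureTheory Filter

/-- A bounded family converges weakly to `0` as soon as it does so when tested against a set with
trivial orthogonal complement. -/
theorem tendsto_inner_zero_of_bounded_of_total {E ι : Type*} [NormedAddCommGroup E]
    [InnerProductSpace ℝ E] [CompleteSpace E] {l : Filter ι} {u : ι → E} {M : ℝ}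
    (hM : ∀ i, ‖u i‖ ≤ M) {s : Set E}
    (hs : ∀ f ∈ s, Tendsto (fun i => inner ℝ (u i) f) l (nhds 0))
    (htotal : ∀ h : E, (∀ f ∈ s, inner ℝ f h = 0) → h = 0) (f : E) :
    Tendsto (fun i => inner ℝ (u i) f) l (nhds 0) := by
  have hspan : ∀ g ∈ Submodule.span ℝ s, Tendsto (fun i => inner ℝ (u i) g) l (nhds 0) := by
    intro g hg
    induction hg using Submodule.span_induction with
    | mem x hx => exact hs x hx
    | zero => simp [tendsto_const_nhds]
    | add x y _ _ hx hy => simpa [inner_add_right] using hx.add hy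
    | smul c x _ hx => simpa [inner_smul_right] using hx.const_mul c
  have hdense : (Submodule.span ℝ s).topologicalClosure = ⊤ := by
    rw [Submodule.topologicalClosure_eq_top_iff, Submodule.eq_bot_iff]
    intro h hh
    exact htotal h fun g hg => (Submodule.mem_orthogonal _ _).1 hh g (Submodule.subset_span hg)
  have hf : f ∈ closure (Submodule.span ℝ s : Set E) := by
    rw [← Submodule.topologicalClosure_coe, hdense]
    trivial
  rw [Metric.tendsto_nhds]
  intro ε hε
  have hK : 0 < |M| + 1 := by positivity
  obtain ⟨g, hg, hfg⟩ := Metric.mem_closure_iff.1 hf (ε / 2 / (|M| + 1)) (by positivity)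
  filter_upwards [Metric.tendsto_nhds.1 (hspan g hg) (ε / 2) (by positivity)] with i hi
  rw [dist_zero_right, Real.norm_eq_abs] at hi ⊢
  rw [dist_eq_norm, lt_div_iff₀ hK] at hfg
  have hsplit : inner ℝ (u i) f = inner ℝ (u i) (f - g) + inner ℝ (u i) g := by
    rw [inner_sub_right]; ring
  have hle : |inner ℝ (u i) (f - g)| ≤ ‖f - g‖ * (|M| + 1) := by
    rw [mul_comm]
    refine (abs_real_inner_le_norm _ _).trans ?_
    gcongr
    linarith [hM i, le_abs_self M]
  rw [hsplit]
  linarith [abs_add_le (inner ℝ (u i) (f - g)) (inner ℝ (u i) g)]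

/-- A bounded family that is asymptotically invariant under a linear isometry whose fixed vectors
are all multiples of `e`, and that is asymptotically orthogonal to `e`, converges weakly to `0`. -/
theorem LinearIsometry.tendsto_inner_zero_of_asymptotically_invariant {E ι : Type*}
    [NormedAddCommGroup E] [InnerProductSpace ℝ E] [CompleteSpace E] {l : Filter ι}
    (U : E →ₗᵢ[ℝ] E) {e : E} (hfix : ∀ h, U h = h → ∃ c : ℝ, h = c • e) {u : ι → E} {M : ℝ}
    (hM : ∀ i, ‖u i‖ ≤ M) (hU : Tendsto (fun i => ‖U (u i) - u i‖) l (nhds 0))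
    (he : Tendsto (fun i => inner ℝ (u i) e) l (nhds 0)) (f : E) :
    Tendsto (fun i => inner ℝ (u i) f) l (nhds 0) := by
  refine tendsto_inner_zero_of_bounded_of_total hM
    (s := insert e (Set.range fun g => U g - g)) ?_ ?_ f
  · rintro _ (rfl | ⟨g, rfl⟩)
    · exact he
    · refine squeeze_zero_norm (fun i => ?_) (by simpa using hU.mul_const ‖g‖)
      have hinner : inner ℝ (u i) (U g - g) = inner ℝ (u i - U (u i)) (U g) := by
        rw [inner_sub_right, inner_sub_left, U.inner_map_map]
      rw [hinner, norm_sub_rev, ← U.norm_map g]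
      exact norm_inner_le_norm _ _
  · intro h hh
    have horth : inner ℝ (U h - h) h = 0 := hh _ (Or.inr ⟨h, rfl⟩)
    have hUh : U h = h := by
      rw [inner_sub_left, real_inner_self_eq_norm_sq] at horth
      have hsq := norm_sub_sq_real (U h) h
      rw [U.norm_map] at hsq
      rw [← sub_eq_zero, ← norm_eq_zero, ← sq_eq_zero_iff]
      linarith
    obtain ⟨c, hc⟩ := hfix h hUh
    have heh : inner ℝ e h = 0 := hh e (Or.inl rfl)
    rw [← inner_self_eq_zero (𝕜 := ℝ)]
    nth_rewrite 1 [hc]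
    rw [inner_smul_left, heh, mul_zero]

/-- If `T` is an ergodic invertible measure-preserving transformation of a
probability space, and `D j` are measurable sets with `μ(D j) → a > 0` and
`μ(D j Δ T D j) → 0`, then for all measurable `A, B`:
`μ(D j ∩ A ∩ B) − a·μ(A ∩ B) → 0`, i.e. the indicator multiplication operators `D̂(j)`
converge weakly to `a·I`. -/
theorem indicator_ops_tendsto_weakly_smul_id
    {X : Type*} [MeasurableSpace X] (μ : Measure X) [IsProbabilityMeasure μ]
    (T S : X → X) (hT : Ergodic T μ) (hS : MeasurePreserving S μ μ)
    (hST : Function.LeftInverse S T) (hTS : Function.RightInverse S T)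
    (D : ℕ → Set X) (hDm : ∀ j, MeasurableSet (D j))
    (a : ℝ) (ha : 0 < a)
    (hDa : Tendsto (fun j => (μ (D j)).toReal) atTop (nhds a))
    (hDT : Tendsto (fun j => (μ (symmDiff (D j) (S ⁻¹' (D j)))).toReal) atTop (nhds 0)) :
    ∀ A B : Set X, MeasurableSet A → MeasurableSet B →
      Tendsto (fun j => (μ (D j ∩ A ∩ B)).toReal - a * (μ (A ∩ B)).toReal)
        atTop (nhds 0) := by
  intro A B hA hB
  let U := Lp.compMeasurePreservingₗᵢ (E := ℝ) (p := 2) ℝ T hT.toMeasurePreserving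
  let χ : ∀ s : Set X, MeasurableSet s → Lp ℝ 2 μ :=
    fun s hs => indicatorConstLp 2 hs (measure_ne_top μ s) 1
  have hinner : ∀ s t (hs : MeasurableSet s) (ht : MeasurableSet t),
      inner ℝ (χ s hs) (χ t ht) = μ.real (s ∩ t) := fun s t hs ht =>
    L2.real_inner_indicatorConstLp_one_indicatorConstLp_one hs ht
  have hnorm : ∀ s (hs : MeasurableSet s), ‖χ s hs‖ = √(μ.real s) := fun s hs => by
    rw [norm_eq_sqrt_real_inner, hinner, Set.inter_self]
  let e := χ Set.univ .univ
  have hUe : U e = e := rfl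
  have hfix : ∀ h, U h = h → ∃ c : ℝ, h = c • e := by
    intro h hh
    have hcomp := Lp.coeFn_compMeasurePreserving h hT.toMeasurePreserving
    rw [show Lp.compMeasurePreserving T hT.toMeasurePreserving h = h from hh] at hcomp
    obtain ⟨c, hc⟩ := hT.ae_eq_const_of_ae_eq_comp_ae (Lp.aestronglyMeasurable h) hcomp.symm
    refine ⟨c, Lp.ext ?_⟩
    filter_upwards [hc, Lp.coeFn_smul c e, indicatorConstLp_coeFn (p := 2) (c := (1 : ℝ))
      (hs := MeasurableSet.univ) (hμs := measure_ne_top μ Set.univ)] with x h₁ h₂ h₃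
    rw [h₁, h₂, Pi.smul_apply, show e x = _ from h₃]
    simp
  have hbound : ∀ j, ‖χ (D j) (hDm j) - a • e‖ ≤ 1 + ‖a • e‖ := fun j => by
    refine (norm_sub_le _ _).trans (add_le_add_left ?_ _)
    rw [hnorm]
    exact Real.sqrt_le_one.2 measureReal_le_one
  have hinv : Tendsto (fun j => ‖U (χ (D j) (hDm j) - a • e) - (χ (D j) (hDm j) - a • e)‖)
      atTop (nhds 0) := by
    have hsqrt := hDT.sqrt
    rw [Real.sqrt_zero] at hsqrt
    refine hsqrt.congr fun j => ?_
    have hUχ : U (χ (D j) (hDm j)) = χ (T ⁻¹' D j) (hT.measurable (hDm j)) := rfl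
    have hpre : T ⁻¹' symmDiff (D j) (S ⁻¹' D j) = symmDiff (T ⁻¹' D j) (D j) := by
      ext x
      simp [Set.mem_symmDiff, hST x]
    rw [map_sub, map_smul, hUe, sub_sub_sub_cancel_right, hUχ, ← dist_eq_norm,
      dist_indicatorConstLp_eq_norm]
    refine Eq.trans ?_ (hnorm _ ((hT.measurable (hDm j)).symmDiff (hDm j))).symm
    rw [← hpre, measureReal_def, hT.measure_preimage
      ((hDm j).symmDiff (hS.measurable (hDm j))).nullMeasurableSet]
  have horth : Tendsto (fun j => inner ℝ (χ (D j) (hDm j) - a • e) e) atTop (nhds 0) := by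
    have hsub := hDa.sub_const a
    rw [sub_self] at hsub
    refine hsub.congr fun j => ?_
    rw [inner_sub_left, inner_smul_left, hinner, hinner]
    simp [measureReal_def]
  refine (U.tendsto_inner_zero_of_asymptotically_invariant hfix hbound hinv horth
    (χ (A ∩ B) (hA.inter hB))).congr fun j => ?_
  rw [inner_sub_left, inner_smul_left, hinner, hinner, Set.univ_inter, ← Set.inter_assoc]
  rfl
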